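/- Let A = {A_0,…,A_d} be an association scheme on vertex set V and let m, n ≥ 1. Let φ be the natural bijection from (V^n)^m to V^{mn} given by concatenation. Then for all x, y ∈ (V^n)^m, the H(mn,A)-profile satisfies h(φ(x),φ(y)) = Σ_{k=1}^{m} h(x_k,y_k). Consequently, for each vector α of d+1 nonnegative integers summing to mn, the matrix A_α of H(mn,A), transported along φ, equals the sum of the matrices A_μ of H(m,H(n,A)) over all those classes μ of H(m,H(n,A)) (μ assigns to each vector β of d+1 nonnegative integers summing to n a multiplicity μ(β), with Σ_β μ(β) = m) satisfying Σ_β μ(β)·β = α; that is, H(mn,A) is a subscheme of H(m,H(n,A)). -/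

import Mathlib

open Matrix Finset MvPolynomial

/-- An association scheme with `d` classes on the finite vertex set `V`. -/
structure AssocScheme (d : ℕ) (V : Type) [Fintype V] [DecidableEq V] : Type where
  A : Fin (d + 1) → Matrix V V ℂ
  entries_zero_or_one : ∀ i x y, A i x y = 0 ∨ A i x y = 1
  A_zero : A 0 = 1
  A_sum : ∑ i, A i = Matrix.of fun _ _ => 1
  transpose_mem : ∀ i, ∃ j, (A i)ᵀ = A j
  mul_eq_lin_comb : ∀ i j, ∃ p : Fin (d + 1) → ℂ, A i * A j = ∑ k, p k • A k
  mul_comm' : ∀ i j, A i * A j = A j * A i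

open Classical in
/-- `h(x,y)`: the vector whose `r`-th entry counts coordinates `j` with `(A_r)_{x_j,y_j} = 1`. -/
noncomputable def AssocScheme.profile {d : ℕ} {V : Type} [Fintype V] [DecidableEq V]
    (S : AssocScheme d V) (n : ℕ) (x y : Fin n → V) : Fin (d + 1) → ℕ :=
  fun r => (Finset.univ.filter fun j : Fin n => S.A r (x j) (y j) = 1).card

open Classical in
/-- The matrix `A_α` of the generalized Hamming scheme `H(n,A)`. -/
noncomputable def AssocScheme.ham {d : ℕ} {V : Type} [Fintype V] [DecidableEq V]
    (S : AssocScheme d V) (n : ℕ) (α : Fin (d + 1) → ℕ) :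
    Matrix (Fin n → V) (Fin n → V) ℂ :=
  Matrix.of fun x y => if S.profile n x y = α then 1 else 0

/-- Concatenation: the natural bijection `(V^n)^m → V^{mn}`. -/
def concat {V : Type} (m n : ℕ) (x : Fin m → Fin n → V) : Fin (m * n) → V :=
  fun k => x (finProdFinEquiv.symm k).1 (finProdFinEquiv.symm k).2

open Classical in
/-- The class matrix of `H(m, H(n,A))` attached to the multiplicity function `μ`,
which assigns to each profile `β` of `H(n,A)` the number of coordinates `k` whose
pair `(x_k, y_k)` has profile `β`. -/
noncomputable def ham2 {d : ℕ} {V : Type} [Fintype V] [DecidableEq V]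
    (S : AssocScheme d V) (n m : ℕ) (μ : (Fin (d + 1) → ℕ) → ℕ) :
    Matrix (Fin m → Fin n → V) (Fin m → Fin n → V) ℂ :=
  Matrix.of fun x y =>
    if (fun β => (Finset.univ.filter fun k : Fin m => S.profile n (x k) (y k) = β).card) = μ
    then 1 else 0

open Classical in
/-- The classes of `H(m, H(n,A))`: multiplicity functions `μ` supported on the
vectors of `d+1` nonnegative integers summing to `n`, with total multiplicity `m`. -/
noncomputable def classIndex (d n m : ℕ) : Finset ((Fin (d + 1) → ℕ) → ℕ) :=
  ((((Finset.Nat.antidiagonalTuple (d + 1) n).pi fun _ => Finset.range (m + 1)).image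
      fun g β => if h : β ∈ Finset.Nat.antidiagonalTuple (d + 1) n then g β h else 0)).filter
    fun μ => ∑ β ∈ Finset.Nat.antidiagonalTuple (d + 1) n, μ β = m

/-!
Grouping the `m * n` coordinates into `m` blocks of length `n` makes the profile of a concatenation
the sum of the profiles of its blocks. This sum depends only on how often each profile `β` occurs
among the blocks, which is the class `μ` of the pair in `H(m, H(n, A))`, and it equals `∑ μ β • β`.
Hence the `(x, y)` entry of `∑ A_μ`, taken over all `μ` with `∑ μ β • β = α`, is `1` exactly when
the concatenations of `x` and `y` have profile `α`.
-/

theorem mem_classIndex {d n m : ℕ} {μ : (Fin (d + 1) → ℕ) → ℕ} :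
    μ ∈ classIndex d n m ↔
      (∀ β ∉ Nat.antidiagonalTuple (d + 1) n, μ β = 0) ∧
        ∑ β ∈ Nat.antidiagonalTuple (d + 1) n, μ β = m := by
  classical
  rw [classIndex, mem_filter]
  refine and_congr_left fun hsum => ⟨fun hμ β hβ => ?_, fun hsupp => mem_image.2 ?_⟩
  · obtain ⟨g, -, rfl⟩ := mem_image.1 hμ
    exact dif_neg hβ
  · refine ⟨fun β _ => μ β, mem_pi.2 fun β hβ => ?_, funext fun β => ?_⟩
    · rw [mem_range, Nat.lt_succ_iff, ← hsum]
      exact single_le_sum (fun _ _ => Nat.zero_le _) hβ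
    · rw [dite_eq_ite, ite_eq_left_iff]
      exact fun hβ => (hsupp β hβ).symm

namespace AssocScheme

variable {d m n : ℕ} {V : Type} [Fintype V] [DecidableEq V] (S : AssocScheme d V)

open Classical in
theorem card_filter_A_eq_one (u v : V) : #{r | S.A r u v = 1} = 1 := by
  have entry_eq_indicator (r : Fin (d + 1)) : S.A r u v = if S.A r u v = 1 then 1 else 0 := by
    rcases S.entries_zero_or_one r u v with h | h <;> simp [h]
  have sum_entries : ∑ r, S.A r u v = 1 := by
    simpa only [Matrix.sum_apply, of_apply] using congrFun₂ S.A_sum u v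
  rw [sum_congr rfl fun r _ => entry_eq_indicator r, ← natCast_card_filter] at sum_entries
  exact_mod_cast sum_entries

theorem profile_mem_antidiagonalTuple (x y : Fin n → V) :
    S.profile n x y ∈ Nat.antidiagonalTuple (d + 1) n := by
  classical
  rw [Nat.mem_antidiagonalTuple]
  calc ∑ r, S.profile n x y r
      = ∑ j, #{r | S.A r (x j) (y j) = 1} :=
        sum_card_bipartiteAbove_eq_sum_card_bipartiteBelow fun r j => S.A r (x j) (y j) = 1
    _ = n := by simp [card_filter_A_eq_one]

theorem profile_concat (x y : Fin m → Fin n → V) :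
    S.profile (m * n) (concat m n x) (concat m n y) = ∑ k, S.profile n (x k) (y k) := by
  classical
  ext r
  simp only [profile, card_filter, Finset.sum_apply]
  calc ∑ i, (if S.A r (concat m n x i) (concat m n y i) = 1 then 1 else 0)
      = ∑ p : Fin m × Fin n, if S.A r (x p.1 p.2) (y p.1 p.2) = 1 then 1 else 0 :=
        finProdFinEquiv.symm.sum_comp fun p : Fin m × Fin n =>
          if S.A r (x p.1 p.2) (y p.1 p.2) = 1 then 1 else 0
    _ = ∑ k, ∑ j, if S.A r (x k j) (y k j) = 1 then 1 else 0 := Fintype.sum_prod_type _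

/-- The profile of `(x, y)` in `H(m, H(n, A))`, recording how many blocks `(x k, y k)` have each
profile `β` in `H(n, A)`. As in `ham2`, it is a function on all vectors `β`, zero on those that do
not sum to `n`. -/
noncomputable def iteratedProfile (x y : Fin m → Fin n → V) (β : Fin (d + 1) → ℕ) : ℕ :=
  #{k | S.profile n (x k) (y k) = β}

open Classical in
theorem ham2_apply (μ : (Fin (d + 1) → ℕ) → ℕ) (x y : Fin m → Fin n → V) :
    ham2 S n m μ x y = if S.iteratedProfile x y = μ then 1 else 0 :=
  rfl

theorem sum_iteratedProfile_smul {M : Type*} [AddCommMonoid M] (x y : Fin m → Fin n → V)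
    (g : (Fin (d + 1) → ℕ) → M) :
    ∑ β ∈ Nat.antidiagonalTuple (d + 1) n, S.iteratedProfile x y β • g β =
      ∑ k, g (S.profile n (x k) (y k)) := by
  simp only [iteratedProfile, ← sum_const]
  exact sum_fiberwise_of_maps_to' (fun k _ => S.profile_mem_antidiagonalTuple (x k) (y k)) g

theorem sum_iteratedProfile_smul_self (x y : Fin m → Fin n → V) :
    ∑ β ∈ Nat.antidiagonalTuple (d + 1) n, S.iteratedProfile x y β • β =
      S.profile (m * n) (concat m n x) (concat m n y) :=
  (S.sum_iteratedProfile_smul x y id).trans (S.profile_concat x y).symm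

theorem iteratedProfile_mem_classIndex (x y : Fin m → Fin n → V) :
    S.iteratedProfile x y ∈ classIndex d n m := by
  refine mem_classIndex.2 ⟨fun β hβ => ?_, ?_⟩
  · refine card_eq_zero.2 (filter_eq_empty_iff.2 fun k _ hk => hβ ?_)
    exact hk ▸ S.profile_mem_antidiagonalTuple (x k) (y k)
  · simpa using S.sum_iteratedProfile_smul x y fun _ => (1 : ℕ)

theorem ham_concat_eq_sum_ham2 (α : Fin (d + 1) → ℕ) :
    (Matrix.of fun x y : Fin m → Fin n → V => S.ham (m * n) α (concat m n x) (concat m n y)) =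
      ∑ μ ∈ classIndex d n m with ∑ β ∈ Nat.antidiagonalTuple (d + 1) n, μ β • β = α,
        ham2 S n m μ := by
  classical
  ext x y
  simp only [Matrix.sum_apply, ham2_apply, sum_ite_eq, mem_filter, of_apply, ham,
    iteratedProfile_mem_classIndex, sum_iteratedProfile_smul_self, true_and]

end AssocScheme

/-- Under concatenation, the profile is additive:
`h(φ(x), φ(y)) = Σ_k h(x_k, y_k)`, and each class matrix of `H(mn, A)` is the sum of
the class matrices of `H(m, H(n,A))` refining it; that is, `H(mn,A)` is a subscheme
of `H(m, H(n,A))`. -/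
theorem ham_iterated_subscheme {V : Type} [Fintype V] [DecidableEq V]
    {d : ℕ} (S : AssocScheme d V) (m n : ℕ) (hm : 1 ≤ m) (hn : 1 ≤ n) :
    (∀ x y : Fin m → Fin n → V,
        S.profile (m * n) (concat m n x) (concat m n y)
          = fun r => ∑ k, S.profile n (x k) (y k) r) ∧
    (∀ α ∈ Finset.Nat.antidiagonalTuple (d + 1) (m * n),
        (Matrix.of fun x y : Fin m → Fin n → V =>
            S.ham (m * n) α (concat m n x) (concat m n y))
          = ∑ μ ∈ (classIndex d n m).filter
              (fun μ => ∀ r, ∑ β ∈ Finset.Nat.antidiagonalTuple (d + 1) n,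
                  μ β * β r = α r),
              ham2 S n m μ) := by
  refine ⟨fun x y => ?_, fun α _ => ?_⟩
  · ext r
    rw [S.profile_concat, Finset.sum_apply]
  · rw [S.ham_concat_eq_sum_ham2]
    refine Finset.sum_congr (Finset.filter_congr fun μ _ => ?_) fun _ _ => rfl
    simp only [funext_iff, Finset.sum_apply, Pi.smul_apply, smul_eq_mul]
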